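/- Let X be a proper geodesic metric space that is not compact, fix p₀ ∈ X, define b : X → ℝ by b(p) = inf over all unit-speed rays c with c(0) = p₀ of b_c(p), and for t ∈ ℝ set C_t = b^{-1}([−t,∞)). Then for all t₁ ≤ t₂ one has C_{t₁} = { p ∈ C_{t₂} : dist(p, ∂C_{t₂}) ≥ t₂ − t₁ }, where ∂C_{t₂} denotes the topological frontier of C_{t₂} and dist(p, ∂C_{t₂}) is the infimum of dist(p, r) over r ∈ ∂C_{t₂}; in particular C_{t₁} ⊆ C_{t₂}. -/

import Mathlib

open Filter
open scoped ENNReal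

/-- A unit-speed ray in a metric space: `dist (c s) (c t) = |s - t|` for all `s, t ≥ 0`. -/
def IsUnitSpeedRay {X : Type*} [MetricSpace X] (c : ℝ → X) : Prop :=
  ∀ s t : ℝ, 0 ≤ s → 0 ≤ t → dist (c s) (c t) = |s - t|

/-!
The function `b` is 1-Lipschitz, so a point with `b p ≥ -t₁` has distance at least `t₂ - t₁` to
the frontier of `C_{t₂}`, on which `b = -t₂`.  Conversely, if `-t₂ ≤ b p < -t₁`, some ray `c` and
some large `T` satisfy `dist p (c T) - T < -t₁`, while `b (c T) ≤ -T < -t₂`.  A geodesic from `p` to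
`c T` thus leaves `C_{t₂}` through a frontier point `r`, and `-t₂ = b r ≤ dist r (c T) - T` gives
`dist p r = dist p (c T) - dist r (c T) ≤ dist p (c T) - T + t₂ < t₂ - t₁`.
-/

open Set Metric Topology

section Topology

variable {X : Type*} [TopologicalSpace X]

theorem exists_mem_frontier_of_isPreconnected {s K : Set X} (hK : IsPreconnected K) {x y : X}
    (hx : x ∈ K) (hy : y ∈ K) (hxs : x ∈ s) (hys : y ∉ s) : ∃ z ∈ K, z ∈ frontier s := by
  by_contra! hfr
  have hcover : K ⊆ interior s ∪ interior sᶜ :=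
    compl_frontier_eq_union_interior (s := s) ▸ hfr
  have hdisj : Disjoint (interior s) (interior sᶜ) :=
    disjoint_compl_right.mono interior_subset interior_subset
  rcases hK.subset_or_subset isOpen_interior isOpen_interior hdisj hcover with hin | hout
  · exact hys (interior_subset (hin hy))
  · exact interior_subset (hout hx) hxs

theorem eq_of_mem_frontier_preimage_Ici {α : Type*} [LinearOrder α] [TopologicalSpace α]
    [OrderTopology α] [DenselyOrdered α] [NoMinOrder α] {f : X → α} (hf : Continuous f) {a : α}
    {r : X} (hr : r ∈ frontier (f ⁻¹' Ici a)) : f r = a := by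
  have hfr : f r ∈ frontier (Ici a) := hf.frontier_preimage_subset _ hr
  rwa [frontier_Ici] at hfr

end Topology

section Segments

/-- A geodesic space: any two points are joined by a geodesic, that is, by a map which on `[0, 1]`
multiplies distances by a constant `L`. Values of the map outside `[0, 1]` are irrelevant. -/
def IsGeodesicSpace (X : Type*) [PseudoMetricSpace X] : Prop :=
  ∀ x y : X, ∃ (g : ℝ → X) (L : ℝ), 0 ≤ L ∧
    (∀ s ∈ Icc (0 : ℝ) 1, ∀ t ∈ Icc (0 : ℝ) 1, dist (g s) (g t) = L * |s - t|) ∧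
    g 0 = x ∧ g 1 = y

/-- A weak form of the notion of length space: any two points lie in a connected set on which the
triangle inequality between them is an equality up to an arbitrarily small error. In a length space
the image of an almost shortest path is such a set. -/
def HasApproxSegments (X : Type*) [PseudoMetricSpace X] : Prop :=
  ∀ x y : X, ∀ ε : ℝ, 0 < ε → ∃ K : Set X, IsPreconnected K ∧ x ∈ K ∧ y ∈ K ∧
    ∀ z ∈ K, dist x z + dist z y ≤ dist x y + ε

variable {X : Type*} [PseudoMetricSpace X]

theorem IsGeodesicSpace.exists_unitSpeed_segment (hX : IsGeodesicSpace X) (x y : X) :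
    ∃ f : ℝ → X, f 0 = x ∧
      ∀ s ∈ Icc 0 (dist x y), ∀ t ∈ Icc 0 (dist x y), dist (f s) (f t) = |s - t| := by
  obtain ⟨g, L, hL, hg, rfl, rfl⟩ := hX x y
  have hdist : dist (g 0) (g 1) = L := by
    simpa using hg 0 (by simp) 1 (by simp)
  rw [hdist]
  rcases hL.eq_or_lt with rfl | hpos
  · refine ⟨fun _ => g 0, rfl, fun s hs t ht => ?_⟩
    simp [le_antisymm hs.2 hs.1, le_antisymm ht.2 ht.1]
  · have hmem : ∀ s ∈ Icc 0 L, s / L ∈ Icc (0 : ℝ) 1 := fun s hs =>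
      ⟨div_nonneg hs.1 hL, div_le_one_of_le₀ hs.2 hL⟩
    refine ⟨fun t => g (t / L), by simp, fun s hs t ht => ?_⟩
    rw [hg _ (hmem s hs) _ (hmem t ht), ← sub_div, abs_div, abs_of_pos hpos,
      mul_div_cancel₀ _ hpos.ne']

theorem IsGeodesicSpace.hasApproxSegments (hX : IsGeodesicSpace X) : HasApproxSegments X := by
  intro x y ε hε
  obtain ⟨g, L, -, hg, rfl, rfl⟩ := hX x y
  have h0 : (0 : ℝ) ∈ Icc (0 : ℝ) 1 := by simp
  have h1 : (1 : ℝ) ∈ Icc (0 : ℝ) 1 := by simp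
  have hcont : ContinuousOn g (Icc 0 1) :=
    (LipschitzOnWith.of_dist_le' fun s hs t ht => (hg s hs t ht).le).continuousOn
  refine ⟨g '' Icc 0 1, isPreconnected_Icc.image g hcont, mem_image_of_mem g h0,
    mem_image_of_mem g h1, ?_⟩
  rintro _ ⟨u, hu, rfl⟩
  have hadd : dist (g 0) (g u) + dist (g u) (g 1) = dist (g 0) (g 1) := by
    rw [hg 0 h0 u hu, hg u hu 1 h1, hg 0 h0 1 h1, abs_sub_comm 0 u, abs_sub_comm u 1,
      abs_sub_comm 0 1, abs_of_nonneg (sub_nonneg.2 hu.1), abs_of_nonneg (sub_nonneg.2 hu.2),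
      abs_of_nonneg (sub_nonneg.2 zero_le_one)]
    ring
  linarith

theorem HasApproxSegments.exists_mem_frontier (hX : HasApproxSegments X) {s : Set X} {x y : X}
    (hx : x ∈ s) (hy : y ∉ s) {ε : ℝ} (hε : 0 < ε) :
    ∃ z ∈ frontier s, dist x z + dist z y ≤ dist x y + ε := by
  obtain ⟨K, hK, hxK, hyK, hdist⟩ := hX x y ε hε
  obtain ⟨z, hzK, hz⟩ := exists_mem_frontier_of_isPreconnected hK hxK hyK hx hy
  exact ⟨z, hz, hdist z hzK⟩

end Segments

section SuperlevelSets

variable {X : Type*} [PseudoMetricSpace X]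

theorem ofReal_sub_le_infEDist_frontier_preimage_Ici {f : X → ℝ} (hf : LipschitzWith 1 f)
    {p : X} {a a' : ℝ} (hp : a' ≤ f p) :
    ENNReal.ofReal (a' - a) ≤ infEDist p (frontier (f ⁻¹' Ici a)) := by
  refine le_infEDist.2 fun r hr => ?_
  rw [edist_dist]
  refine ENNReal.ofReal_le_ofReal ?_
  calc a' - a ≤ f p - f r := by rw [eq_of_mem_frontier_preimage_Ici hf.continuous hr]; gcongr
    _ ≤ dist (f p) (f r) := le_abs_self _
    _ ≤ dist p r := by simpa using hf.dist_le_mul p r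

theorem HasApproxSegments.infEDist_frontier_preimage_Ici_lt (hX : HasApproxSegments X) {f : X → ℝ}
    (hf : Continuous f) {p y : X} {a a' T : ℝ} (hfy : ∀ q, f q ≤ dist q y - T) (hT : -T < a)
    (hp : a ≤ f p) (hpy : dist p y - T < a') :
    infEDist p (frontier (f ⁻¹' Ici a)) < ENNReal.ofReal (a' - a) := by
  have hy : y ∉ f ⁻¹' Ici a := fun hya => by
    have hya' : a ≤ f y := hya
    have := hfy y
    rw [dist_self] at this
    linarith
  obtain ⟨ε, hε, hεlt⟩ : ∃ ε, 0 < ε ∧ ε < a' - (dist p y - T) := exists_between (sub_pos.2 hpy)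
  obtain ⟨r, hr, hdist⟩ := hX.exists_mem_frontier (s := f ⁻¹' Ici a) hp hy hε
  refine infEDist_lt_iff.2 ⟨r, hr, ?_⟩
  have hry : a ≤ dist r y - T := eq_of_mem_frontier_preimage_Ici hf hr ▸ hfy r
  rw [edist_dist, ENNReal.ofReal_lt_ofReal_iff_of_nonneg dist_nonneg]
  linarith

end SuperlevelSets

theorem lipschitzWith_of_isGLB {X ι : Type*} [PseudoMetricSpace X] {K : NNReal} {F : ι → X → ℝ}
    {R : Set ι} {b : X → ℝ} (hF : ∀ i ∈ R, LipschitzWith K (F i))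
    (hb : ∀ p, IsGLB ((F · p) '' R) (b p)) : LipschitzWith K b := by
  refine LipschitzWith.of_le_add_mul K fun p q => sub_le_iff_le_add.1 ((hb q).2 ?_)
  rintro _ ⟨i, hi, rfl⟩
  have hbp : b p ≤ F i p := (hb p).1 (mem_image_of_mem _ hi)
  exact sub_le_iff_le_add.2 (hbp.trans ((hF i hi).le_add_mul p q))

section Busemann

variable {X : Type*}

theorem lipschitzWith_one_of_tendsto_dist_sub [PseudoMetricSpace X] {c : ℝ → X} {β : X → ℝ}
    (hβ : ∀ q, Tendsto (fun t => dist q (c t) - t) atTop (𝓝 (β q))) : LipschitzWith 1 β := by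
  refine LipschitzWith.of_le_add fun p q =>
    le_of_tendsto_of_tendsto' (hβ p) ((hβ q).add_const (dist p q)) fun t => ?_
  linarith [dist_triangle p q (c t)]

variable [MetricSpace X] {c : ℝ → X} {q : X} {β : ℝ}

theorem IsUnitSpeedRay.dist_eq_sub (hc : IsUnitSpeedRay c) {s t : ℝ} (hs : 0 ≤ s) (hst : s ≤ t) :
    dist (c s) (c t) = t - s := by
  rw [hc s t hs (hs.trans hst), abs_sub_comm, abs_of_nonneg (sub_nonneg.2 hst)]

theorem IsUnitSpeedRay.le_dist_sub_of_tendsto (hc : IsUnitSpeedRay c)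
    (hβ : Tendsto (fun t => dist q (c t) - t) atTop (𝓝 β)) {t : ℝ} (ht : 0 ≤ t) :
    β ≤ dist q (c t) - t := by
  refine le_of_tendsto hβ ((eventually_ge_atTop t).mono fun u hu => ?_)
  linarith [dist_triangle q (c t) (c u), hc.dist_eq_sub ht hu]

theorem IsUnitSpeedRay.neg_dist_le_of_tendsto (hc : IsUnitSpeedRay c)
    (hβ : Tendsto (fun t => dist q (c t) - t) atTop (𝓝 β)) : -dist q (c 0) ≤ β := by
  refine ge_of_tendsto hβ ((eventually_ge_atTop 0).mono fun u hu => ?_)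
  linarith [dist_triangle_left (c 0) (c u) q, hc.dist_eq_sub le_rfl hu]

theorem isGLB_busemann_sInf {busemann : (ℝ → X) → X → ℝ}
    (hbus : ∀ c : ℝ → X, IsUnitSpeedRay c → ∀ q : X,
      Tendsto (fun t => dist q (c t) - t) atTop (𝓝 (busemann c q)))
    {p₀ : X} (hray : ∃ c : ℝ → X, IsUnitSpeedRay c ∧ c 0 = p₀) (p : X) :
    IsGLB ((busemann · p) '' {c | IsUnitSpeedRay c ∧ c 0 = p₀})
      (sInf {v | ∃ c : ℝ → X, IsUnitSpeedRay c ∧ c 0 = p₀ ∧ v = busemann c p}) := by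
  have himage : {v | ∃ c : ℝ → X, IsUnitSpeedRay c ∧ c 0 = p₀ ∧ v = busemann c p} =
      (busemann · p) '' {c | IsUnitSpeedRay c ∧ c 0 = p₀} := by
    ext v
    simp only [mem_ofPred_eq, mem_image, and_assoc, eq_comm]
  rw [himage]
  refine isGLB_csInf (Set.Nonempty.image _ hray) ⟨-dist p p₀, ?_⟩
  rintro _ ⟨c, ⟨hc, rfl⟩, rfl⟩
  exact hc.neg_dist_le_of_tendsto (hbus c hc p)

end Busemann

section ExistenceOfRays

variable {X : Type*} [MetricSpace X] [ProperSpace X]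

/- The ray is the pointwise limit of the segments along a nonprincipal ultrafilter, which exists
since the points at time `t` all lie in the compact ball of radius `t`. -/
theorem exists_isUnitSpeedRay_of_segments {p : X}
    (hseg : ∀ n : ℕ, ∃ f : ℝ → X, f 0 = p ∧
      ∀ s ∈ Icc (0 : ℝ) n, ∀ t ∈ Icc (0 : ℝ) n, dist (f s) (f t) = |s - t|) :
    ∃ c : ℝ → X, IsUnitSpeedRay c ∧ c 0 = p := by
  choose f hf0 hf using hseg
  have hmem : ∀ t : ℝ, 0 ≤ t → ∀ᶠ n : ℕ in hyperfilter ℕ, t ∈ Icc (0 : ℝ) n := fun t ht =>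
    ((tendsto_natCast_atTop_atTop.eventually_ge_atTop t).filter_mono
      Nat.hyperfilter_le_atTop).mono fun n hn => ⟨ht, hn⟩
  have hlim : ∀ t : ℝ, 0 ≤ t → ∃ x, Tendsto (f · t) (hyperfilter ℕ) (𝓝 x) := by
    intro t ht
    have hball : ∀ᶠ n in hyperfilter ℕ, f n t ∈ closedBall p t := by
      filter_upwards [hmem t ht] with n hn
      have hdist := hf n t hn 0 ⟨le_rfl, n.cast_nonneg⟩
      rw [hf0, sub_zero, abs_of_nonneg ht] at hdist
      exact hdist.le
    obtain ⟨x, -, hx⟩ := (isCompact_closedBall p t).ultrafilter_le_nhds'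
      ((hyperfilter ℕ).map (f · t)) hball
    exact ⟨x, hx⟩
  have : Nonempty X := ⟨p⟩
  choose! c hc using hlim
  refine ⟨c, fun s t hs ht => ?_, ?_⟩
  · refine tendsto_nhds_unique ((hc s hs).dist (hc t ht)) (tendsto_const_nhds.congr' ?_)
    filter_upwards [hmem s hs, hmem t ht] with n hsn htn
    exact (hf n s hsn t htn).symm
  · exact tendsto_nhds_unique (hc 0 le_rfl) (by simp [hf0])

theorem IsGeodesicSpace.exists_isUnitSpeedRay [NoncompactSpace X] (hX : IsGeodesicSpace X)
    (p : X) : ∃ c : ℝ → X, IsUnitSpeedRay c ∧ c 0 = p := by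
  refine exists_isUnitSpeedRay_of_segments fun n => ?_
  obtain ⟨x, hx⟩ : ∃ x, (n : ℝ) ≤ dist p x :=
    ((tendsto_dist_left_cocompact_atTop p).eventually_ge_atTop (n : ℝ)).exists
  obtain ⟨f, hf0, hf⟩ := hX.exists_unitSpeed_segment p x
  exact ⟨f, hf0, fun s hs t ht => hf s ⟨hs.1, hs.2.trans hx⟩ t ⟨ht.1, ht.2.trans hx⟩⟩

end ExistenceOfRays

theorem busemann_superlevel_dist_frontier_general {X : Type*} [MetricSpace X]
    (hX : HasApproxSegments X) {R : Set (ℝ → X)} (hR : ∀ c ∈ R, IsUnitSpeedRay c)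
    {busemann : (ℝ → X) → X → ℝ}
    (hbus : ∀ c ∈ R, ∀ q : X, Tendsto (fun t => dist q (c t) - t) atTop (𝓝 (busemann c q)))
    {b : X → ℝ} (hb : ∀ p : X, IsGLB ((busemann · p) '' R) (b p)) {t₁ t₂ : ℝ} (h : t₁ ≤ t₂) :
    b ⁻¹' Ici (-t₁) =
      {p ∈ b ⁻¹' Ici (-t₂) |
        ENNReal.ofReal (t₂ - t₁) ≤ infEDist p (frontier (b ⁻¹' Ici (-t₂)))} ∧
    b ⁻¹' Ici (-t₁) ⊆ b ⁻¹' Ici (-t₂) := by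
  have hlip : LipschitzWith 1 b :=
    lipschitzWith_of_isGLB (fun c hc => lipschitzWith_one_of_tendsto_dist_sub (hbus c hc)) hb
  have hsub : b ⁻¹' Ici (-t₁) ⊆ b ⁻¹' Ici (-t₂) :=
    preimage_mono (Ici_subset_Ici.2 (neg_le_neg h))
  rw [← neg_sub_neg t₁ t₂]
  refine ⟨Subset.antisymm
    (fun p hp => ⟨hsub hp, ofReal_sub_le_infEDist_frontier_preimage_Ici hlip hp⟩) ?_, hsub⟩
  rintro p ⟨hp, hdist⟩
  by_contra hlt
  obtain ⟨_, ⟨c, hc, rfl⟩, -, hcp⟩ := (hb p).exists_between (not_le.1 hlt)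
  obtain ⟨T, hpT, hT₂, hT₀⟩ := (((hbus c hc p).eventually_lt_const hcp).and
    ((eventually_gt_atTop t₂).and (eventually_ge_atTop 0))).exists
  have hbT : ∀ q, b q ≤ dist q (c T) - T := fun q =>
    ((hb q).1 (mem_image_of_mem _ hc)).trans ((hR c hc).le_dist_sub_of_tendsto (hbus c hc q) hT₀)
  exact hdist.not_gt
    (hX.infEDist_frontier_preimage_Ici_lt hlip.continuous hbT (neg_lt_neg hT₂) hp hpT)

/-- Let `X` be a proper geodesic noncompact metric space, `p₀ ∈ X`, let `b`
be the infimum over all unit-speed rays `c` with `c 0 = p₀` of the Busemann functions `b_c`,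
and set `C_t = b ⁻¹ [-t,∞)`.  Then for `t₁ ≤ t₂` one has
`C_{t₁} = {p ∈ C_{t₂} : dist(p, ∂C_{t₂}) ≥ t₂ - t₁}` (the distance to the frontier being the
infimum of `dist p r` over `r ∈ ∂C_{t₂}`, equal to `∞` if the frontier is empty); in
particular `C_{t₁} ⊆ C_{t₂}`. -/
theorem busemann_superlevel_dist_frontier {X : Type*} [MetricSpace X] [ProperSpace X]
    (hgeo : ∀ x y : X, ∃ (g : ℝ → X) (L : ℝ), 0 ≤ L ∧
      (∀ s ∈ Set.Icc (0 : ℝ) 1, ∀ t ∈ Set.Icc (0 : ℝ) 1, dist (g s) (g t) = L * |s - t|) ∧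
      g 0 = x ∧ g 1 = y)
    (hnc : ¬ CompactSpace X) (p₀ : X)
    (busemann : (ℝ → X) → X → ℝ)
    (hbus : ∀ c : ℝ → X, IsUnitSpeedRay c → ∀ q : X,
      Tendsto (fun t => dist q (c t) - t) atTop (nhds (busemann c q)))
    (b : X → ℝ)
    (hb : ∀ p : X, b p = sInf {v | ∃ c : ℝ → X, IsUnitSpeedRay c ∧ c 0 = p₀ ∧ v = busemann c p})
    (t₁ t₂ : ℝ) (h : t₁ ≤ t₂) :
    b ⁻¹' Set.Ici (-t₁) =
      {p ∈ b ⁻¹' Set.Ici (-t₂) |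
        ENNReal.ofReal (t₂ - t₁) ≤ ⨅ r ∈ frontier (b ⁻¹' Set.Ici (-t₂)), edist p r} ∧
    b ⁻¹' Set.Ici (-t₁) ⊆ b ⁻¹' Set.Ici (-t₂) := by
  have hX : IsGeodesicSpace X := hgeo
  have := not_compactSpace_iff.1 hnc
  have hglb : ∀ p, IsGLB ((busemann · p) '' {c | IsUnitSpeedRay c ∧ c 0 = p₀}) (b p) := fun p =>
    hb p ▸ isGLB_busemann_sInf hbus (hX.exists_isUnitSpeedRay p₀) p
  exact busemann_superlevel_dist_frontier_general hX.hasApproxSegments (fun c hc => hc.1)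
    (fun c hc => hbus c hc.1) hglb h
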